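/- arXiv:2407.13955 — 2 statements merged into one kernel-verified Lean document; each statement's English description precedes it below -/
import Mathlib

section
/- Assume (L_σ)_ℐℐ is invertible, and let u : 𝒱 → ℝ solve the Dirichlet problem (∇ᵀ(σ ⊙ ∇u))_ℐ = 0, u_ℬ = f. For a temperature T : ℰ → ℝ define C(T) := (κ/π) (L_σ)_ℬℐ ((L_σ)_ℐℐ)⁻¹ R_ℐ ∇ᵀ diag(T ⊙ σ) ∇ R_ℐᵀ ((L_σ)_ℐℐ)⁻¹ (L_σ)_ℐℬ, let T₀ be a constant temperature, δT ∈ ℝ, and T_e := T₀ + δT·δ_e for each e ∈ ℰ. Then for every edge e ∈ ℰ: fᵀ (C(T_e) − C(T₀)) f = (κ/π) δT · (σ ⊙ |∇ R_ℐᵀ R_ℐ u|²)(e); i.e., the vector of differential quadratic-form measurements [fᵀ(C(T_e) − C(T₀))f]_{e∈ℰ} equals (κ/π) δT σ ⊙ |∇ R_ℐᵀ R_ℐ u|². -/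
open Matrix

noncomputable section

variable {E B I : Type*} [Fintype E] [Fintype B] [Fintype I]
  [DecidableEq E] [DecidableEq B] [DecidableEq I]

/-- Discrete gradient of an oriented graph whose edge `e` goes from node `tail e`
to node `head e`, so that `(dGrad R head tail *ᵥ u) e = u (head e) - u (tail e)`.
The node set is `𝒱 = B ⊕ I`, with boundary nodes `B` and interior nodes `I`. -/
def dGrad (R : Type*) [Ring R] (head tail : E → B ⊕ I) : Matrix E (B ⊕ I) R :=
  Matrix.of fun e v => (if v = head e then 1 else 0) - (if v = tail e then 1 else 0)

/-- The weighted graph Laplacian `L_w = ∇ᵀ diag(w) ∇`. -/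
def dLap (R : Type*) [CommRing R] (head tail : E → B ⊕ I) (w : E → R) :
    Matrix (B ⊕ I) (B ⊕ I) R :=
  (dGrad R head tail)ᵀ * Matrix.diagonal w * dGrad R head tail

/-- The restriction matrix `R_ℐ` from vectors on `𝒱 = B ⊕ I` to vectors on `I`;
its transpose extends by zero. -/
def RImat (R : Type*) [Ring R] : Matrix I (B ⊕ I) R :=
  Matrix.of fun i v => if v = Sum.inr i then 1 else 0

/-! Eliminating the interior nodes gives `u_ℐ = P f` with `P = -(L_σ)_ℐℐ⁻¹ (L_σ)_ℐℬ`. As `L_σ` is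
symmetric, `(L_σ)_ℬℐ (L_σ)_ℐℐ⁻¹ = -Pᵀ`, and the two signs in `C(T)` cancel:
`C(T) = (κ/π) (∇ R_ℐᵀ P)ᵀ diag(T ⊙ σ) (∇ R_ℐᵀ P)`. Hence `fᵀ C(T) f` is `κ/π` times the sum over the
edges of `T σ |∇ R_ℐᵀ u_ℐ|²`. This is linear in `T`, and heating one edge singles out its term. -/

section Matrix

variable {k l m n R : Type*}

theorem mulVec_comp_eq_add [Fintype m] [Fintype n] [NonUnitalNonAssocSemiring R]
    (M : Matrix k (m ⊕ n) R) (r : l → k) (v : m ⊕ n → R) :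
    (M *ᵥ v) ∘ r =
      M.submatrix r Sum.inl *ᵥ (v ∘ Sum.inl) + M.submatrix r Sum.inr *ᵥ (v ∘ Sum.inr) := by
  ext i
  simp [mulVec, dotProduct, Fintype.sum_sum_type]

theorem dotProduct_transpose_mul_diagonal_mul_mulVec [Fintype k] [DecidableEq k] [Fintype m]
    [Fintype n] [CommSemiring R] (P : Matrix k m R) (Q : Matrix k n R) (d : k → R)
    (x : m → R) (y : n → R) :
    x ⬝ᵥ ((Pᵀ * diagonal d * Q) *ᵥ y) = ∑ e, d e * ((P *ᵥ x) e * (Q *ᵥ y) e) := by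
  rw [← mulVec_mulVec, ← mulVec_mulVec, dotProduct_mulVec, vecMul_transpose]
  simp only [dotProduct, mulVec_diagonal]
  exact Finset.sum_congr rfl fun e _ => mul_left_comm _ _ _

variable [Fintype n] [DecidableEq n] [CommRing R]

/-- The Poisson matrix of `M`, with `m` indexing the boundary nodes and `n` the interior nodes: it
sends boundary values to the interior values of the vector `v` with these boundary values and
`(M *ᵥ v) ∘ Sum.inr = 0`. This is meaningful only when the interior block of `M` is invertible,
as the inverse is `0` otherwise. -/
def poissonMatrix (M : Matrix (m ⊕ n) (m ⊕ n) R) : Matrix n m R :=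
  -((M.submatrix Sum.inr Sum.inr)⁻¹ * M.submatrix Sum.inr Sum.inl)

theorem comp_inr_eq_poissonMatrix_mulVec [Fintype m] {M : Matrix (m ⊕ n) (m ⊕ n) R}
    (hM : IsUnit (M.submatrix Sum.inr Sum.inr)) {v : m ⊕ n → R} (hv : (M *ᵥ v) ∘ Sum.inr = 0) :
    v ∘ Sum.inr = poissonMatrix M *ᵥ (v ∘ Sum.inl) := by
  have hdet := (isUnit_iff_isUnit_det _).1 hM
  have hsplit : M.submatrix Sum.inr Sum.inl *ᵥ (v ∘ Sum.inl) =
      -(M.submatrix Sum.inr Sum.inr *ᵥ (v ∘ Sum.inr)) :=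
    eq_neg_of_add_eq_zero_left (by rw [← mulVec_comp_eq_add, hv])
  rw [poissonMatrix, neg_mulVec, ← mulVec_mulVec, hsplit, mulVec_neg, neg_neg, mulVec_mulVec,
    nonsing_inv_mul _ hdet, one_mulVec]

theorem transpose_poissonMatrix {M : Matrix (m ⊕ n) (m ⊕ n) R} (hM : M.IsSymm) :
    (poissonMatrix M)ᵀ = -(M.submatrix Sum.inl Sum.inr * (M.submatrix Sum.inr Sum.inr)⁻¹) := by
  rw [poissonMatrix, transpose_neg, transpose_mul, transpose_nonsing_inv, transpose_submatrix,
    transpose_submatrix, hM.eq]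

end Matrix

section Network

variable {R : Type*} [CommRing R]

omit [Fintype B] [Fintype I] in
theorem isSymm_dLap (head tail : E → B ⊕ I) (w : E → R) : (dLap R head tail w).IsSymm := by
  simp [Matrix.IsSymm, dLap, Matrix.mul_assoc]

theorem dLap_mulVec (head tail : E → B ⊕ I) (w : E → R) (u : B ⊕ I → R) :
    dLap R head tail w *ᵥ u =
      (dGrad R head tail)ᵀ *ᵥ fun e => w e * (dGrad R head tail *ᵥ u) e := by
  rw [dLap, ← mulVec_mulVec, ← mulVec_mulVec]
  congr 1
  ext e
  exact mulVec_diagonal w _ e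

theorem RImat_mulVec (u : B ⊕ I → R) : (RImat R : Matrix I (B ⊕ I) R) *ᵥ u = u ∘ Sum.inr := by
  ext i
  simp [RImat, mulVec, dotProduct]

/-- The covariance matrix `C(T)` of the thermal noise currents at the boundary nodes, for
conductivities `σ` and edge temperatures `T`. The parameter `c` stands for the physical constant
`κ/π`, which lets the coefficients be in any commutative ring. -/
def noiseCovariance (head tail : E → B ⊕ I) (σ : E → R) (c : R) (T : E → R) : Matrix B B R :=
  c • ((dLap R head tail σ).submatrix Sum.inl Sum.inr *
    ((dLap R head tail σ).submatrix Sum.inr Sum.inr)⁻¹ *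
    (RImat R : Matrix I (B ⊕ I) R) *
    (dGrad R head tail)ᵀ * Matrix.diagonal (fun e => T e * σ e) *
    dGrad R head tail * (RImat R : Matrix I (B ⊕ I) R)ᵀ *
    ((dLap R head tail σ).submatrix Sum.inr Sum.inr)⁻¹ *
    (dLap R head tail σ).submatrix Sum.inr Sum.inl)

/-- The matrix `∇ R_ℐᵀ P`, with `P` the Poisson matrix of `L_σ`: it sends boundary voltages to the
voltage drops along the edges when the boundary is grounded and the interior nodes keep the
voltages of the solution of the Dirichlet problem. -/
def groundedDrop (head tail : E → B ⊕ I) (σ : E → R) : Matrix E B R :=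
  dGrad R head tail * (RImat R : Matrix I (B ⊕ I) R)ᵀ * poissonMatrix (dLap R head tail σ)

theorem noiseCovariance_eq_smul_groundedDrop (head tail : E → B ⊕ I) (σ : E → R) (c : R)
    (T : E → R) :
    noiseCovariance head tail σ c T =
      c • ((groundedDrop head tail σ)ᵀ * diagonal (fun e => T e * σ e) *
        groundedDrop head tail σ) := by
  rw [noiseCovariance, groundedDrop, transpose_mul, transpose_poissonMatrix (isSymm_dLap ..),
    poissonMatrix]
  simp only [transpose_mul, transpose_transpose, Matrix.mul_assoc, Matrix.neg_mul, Matrix.mul_neg,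
    neg_neg]

theorem groundedDrop_mulVec {head tail : E → B ⊕ I} {σ : E → R}
    (hinv : IsUnit ((dLap R head tail σ).submatrix Sum.inr Sum.inr)) {u : B ⊕ I → R}
    (hu : (dLap R head tail σ *ᵥ u) ∘ Sum.inr = 0) :
    groundedDrop head tail σ *ᵥ (u ∘ Sum.inl) =
      dGrad R head tail *ᵥ ((RImat R : Matrix I (B ⊕ I) R)ᵀ *ᵥ (RImat R *ᵥ u)) := by
  rw [groundedDrop, RImat_mulVec, comp_inr_eq_poissonMatrix_mulVec hinv hu, mulVec_mulVec,
    mulVec_mulVec]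

theorem dotProduct_noiseCovariance_mulVec {head tail : E → B ⊕ I} {σ : E → R}
    (hinv : IsUnit ((dLap R head tail σ).submatrix Sum.inr Sum.inr)) {u : B ⊕ I → R}
    (hu : (dLap R head tail σ *ᵥ u) ∘ Sum.inr = 0) (c : R) (T : E → R) :
    (u ∘ Sum.inl) ⬝ᵥ (noiseCovariance head tail σ c T *ᵥ (u ∘ Sum.inl)) =
      c * ∑ e, T e * (σ e *
        ((dGrad R head tail *ᵥ ((RImat R : Matrix I (B ⊕ I) R)ᵀ *ᵥ (RImat R *ᵥ u))) e) ^ 2) := by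
  rw [noiseCovariance_eq_smul_groundedDrop, smul_mulVec, dotProduct_smul, smul_eq_mul,
    dotProduct_transpose_mul_diagonal_mul_mulVec, groundedDrop_mulVec hinv hu]
  simp only [mul_assoc, sq]

theorem differential_covariance_gives_power_general
    (head tail : E → B ⊕ I) (σ : E → R) (c : R) (T : E → R) (δT : R)
    (hinv : IsUnit ((dLap R head tail σ).submatrix Sum.inr Sum.inr))
    (f : B → R) (u : B ⊕ I → R)
    (hcons : ((dGrad R head tail)ᵀ *ᵥ fun e => σ e * (dGrad R head tail *ᵥ u) e) ∘ Sum.inr = 0)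
    (hbd : u ∘ Sum.inl = f) (e : E) :
    f ⬝ᵥ ((noiseCovariance head tail σ c (fun e' => T e' + δT * (if e' = e then 1 else 0)) -
        noiseCovariance head tail σ c T) *ᵥ f) =
      c * δT *
        (σ e *
          ((dGrad R head tail *ᵥ ((RImat R : Matrix I (B ⊕ I) R)ᵀ *ᵥ (RImat R *ᵥ u))) e) ^ 2) := by
  subst hbd
  rw [← dLap_mulVec] at hcons
  rw [sub_mulVec, dotProduct_sub, dotProduct_noiseCovariance_mulVec hinv hcons,
    dotProduct_noiseCovariance_mulVec hinv hcons, ← mul_sub, ← Finset.sum_sub_distrib, mul_assoc]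
  simp only [add_mul, add_sub_cancel_left, mul_ite, mul_one, mul_zero, ite_mul, zero_mul,
    Finset.sum_ite_eq', Finset.mem_univ, if_true]

end Network

/-- differential thermal-noise measurements give the dissipated power:
for `u` solving the Dirichlet problem with boundary voltage `f`, and every edge `e`,
`fᵀ (C(T_e) − C(T₀)) f = (κ/π) δT (σ ⊙ |∇ R_ℐᵀ R_ℐ u|²)(e)`. -/
theorem differential_covariance_gives_power
    (head tail : E → B ⊕ I) (hloop : ∀ e, head e ≠ tail e) (σ : E → ℝ)
    (κ T₀ δT : ℝ) (hκ : 0 < κ)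
    (hinv : IsUnit ((dLap ℝ head tail σ).submatrix Sum.inr Sum.inr))
    (f : B → ℝ) (u : B ⊕ I → ℝ)
    (hcons : (((dGrad ℝ head tail)ᵀ *ᵥ fun e => σ e * (dGrad ℝ head tail *ᵥ u) e) ∘ Sum.inr = 0))
    (hbd : u ∘ Sum.inl = f)
    (C : (E → ℝ) → Matrix B B ℝ)
    (hC : ∀ T : E → ℝ, C T = (κ / Real.pi) •
      ((dLap ℝ head tail σ).submatrix Sum.inl Sum.inr *
        ((dLap ℝ head tail σ).submatrix Sum.inr Sum.inr)⁻¹ *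
        (RImat ℝ : Matrix I (B ⊕ I) ℝ) *
        (dGrad ℝ head tail)ᵀ * Matrix.diagonal (fun e => T e * σ e) *
        dGrad ℝ head tail * (RImat ℝ : Matrix I (B ⊕ I) ℝ)ᵀ *
        ((dLap ℝ head tail σ).submatrix Sum.inr Sum.inr)⁻¹ *
        (dLap ℝ head tail σ).submatrix Sum.inr Sum.inl)) :
    ∀ e : E,
      f ⬝ᵥ ((C (fun e' => T₀ + δT * (if e' = e then 1 else 0)) - C (fun _ => T₀)) *ᵥ f) =
        κ / Real.pi * δT *
          (σ e *
            ((dGrad ℝ head tail *ᵥ ((RImat ℝ : Matrix I (B ⊕ I) ℝ)ᵀ *ᵥ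
              (RImat ℝ *ᵥ u))) e) ^ 2) := by
  intro e
  rw [hC, hC]
  exact differential_covariance_gives_power_general head tail σ _ _ δT hinv f u hcons hbd e
end
end

section
/- Let σ : ℰ → (0,∞), q' : ℐ → ℝ with q'(x) ≠ 0 for all x ∈ ℐ, q'' : ℐ → ℝ, and ω₁ ∈ ℝ with ω₁ ≠ 0; set q(ω₁) := q' + iω₁q''. Let u₀⁽ʲ⁾ : 𝒱 → ℝ and u₁⁽ʲ⁾ : 𝒱 → ℂ, j = 1,…,N, satisfy (L_σ u₀⁽ʲ⁾)_ℐ + q' ⊙ (u₀⁽ʲ⁾)_ℐ = 0 and (L_σ u₁⁽ʲ⁾)_ℐ + q(ω₁) ⊙ (u₁⁽ʲ⁾)_ℐ = 0. Assume: (a) the hypotheses of the real Schrödinger local-uniqueness theorem hold for σ, q' and the u₀⁽ʲ⁾, namely ⋃_j supp (u₀⁽ʲ⁾)_ℐ = ℐ, (L_σ)_ℐℐ + diag(q') is invertible, and (L_σ)_ℐℐ + diag(s⁽ʲ⁾ ⊙ q') is invertible with s⁽ʲ⁾ = 1 − 2·1_{supp (u₀⁽ʲ⁾)_ℐ}; (b)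 (L_σ)_ℐℐ + diag(q(ω₁)) is invertible; (c) with B⁽ʲ⁾ := −i diag(conj((u₁⁽ʲ⁾)_ℐ)) ((L_σ)_ℐℐ + diag(q(ω₁)))⁻¹ diag((u₁⁽ʲ⁾)_ℐ), the real matrix Re([B⁽¹⁾; … ; B⁽ᴺ⁾]) (vertical concatenation of real parts) has trivial nullspace. Then the linearized two-frequency inverse complex Schrödinger problem from dissipated power is injective: if δq', δq'' : ℐ → ℝ, δu₀⁽ʲ⁾ : 𝒱 → ℝ, δu₁⁽ʲ⁾ : 𝒱 → ℂ satisfy, for all j, (δu₀⁽ʲ⁾)_ℬ = 0, (δu₁⁽ʲ⁾)_ℬ = 0, (L_σ δu₀⁽ʲ⁾)_ℐ + δq' ⊙ (u₀⁽ʲ⁾)_ℐ + q' ⊙ (δu₀⁽ʲ⁾)_ℐ = 0, δq' ⊙ |(u₀⁽ʲ⁾)_ℐ|² + 2q' ⊙ (δu₀⁽ʲ⁾)_ℐ ⊙ (u₀⁽ʲ⁾)_ℐ = 0, (L_σ δu₁⁽ʲ⁾)_ℐ + (δq' + iω₁δq'') ⊙ (u₁⁽ʲ⁾)_ℐ + q(ω₁)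 ⊙ (δu₁⁽ʲ⁾)_ℐ = 0, and δq' ⊙ |(u₁⁽ʲ⁾)_ℐ|² + q' ⊙ conj((u₁⁽ʲ⁾)_ℐ) ⊙ (δu₁⁽ʲ⁾)_ℐ + q' ⊙ (u₁⁽ʲ⁾)_ℐ ⊙ conj((δu₁⁽ʲ⁾)_ℐ) = 0, then δq' = 0, δq'' = 0, δu₀⁽ʲ⁾ = 0 and δu₁⁽ʲ⁾ = 0 for all j. -/
open Matrix

noncomputable section

variable {E B I : Type*} [Fintype E] [Fintype B] [Fintype I]
  [DecidableEq E] [DecidableEq B] [DecidableEq I]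

/-!
At frequency zero, the linearized power equation says `δq' ⊙ u₀ = -2 q' ⊙ δu₀` on the support of
`u₀`, so eliminating `δq'` from the state equation leaves `(L_ℐℐ + diag (s ⊙ q')) δu₀ = 0`. Hence
`δu₀ = 0`, and then `δq' = 0` on the supports of the `u₀`. At frequency `ω₁` only `δq''` remains:
solving the state equation gives `conj u₁ ⊙ δu₁ = ω₁ B δq''`, and the power equation says that this
vector is purely imaginary. Hence `(Re B) δq'' = 0` for every excitation, so `δq'' = 0` and
`δu₁ = 0`.
-/

open scoped ComplexConjugate

theorem mulVec_comp_inr_of_comp_inl_eq_zero {l m n o R : Type*} [Fintype m] [Fintype n]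
    [NonUnitalNonAssocSemiring R] (L : Matrix (l ⊕ o) (m ⊕ n) R) {u : m ⊕ n → R}
    (hu : u ∘ Sum.inl = 0) :
    (L *ᵥ u) ∘ Sum.inr = L.submatrix Sum.inr Sum.inr *ᵥ (u ∘ Sum.inr) := by
  ext i
  have hu' (b : m) : u (Sum.inl b) = 0 := congrFun hu b
  simp [mulVec, dotProduct, hu']

theorem eq_zero_of_comp_inl_of_comp_inr {m n R : Type*} [Zero R] {u : m ⊕ n → R}
    (hl : u ∘ Sum.inl = 0) (hr : u ∘ Sum.inr = 0) : u = 0 :=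
  funext (Sum.rec (congrFun hl) (congrFun hr))

theorem add_diagonal_mulVec {n R : Type*} [Fintype n] [DecidableEq n]
    [NonUnitalNonAssocSemiring R] (A : Matrix n n R) (d v : n → R) :
    (A + diagonal d) *ᵥ v = A *ᵥ v + d * v := by
  ext i
  simp [add_mulVec, mulVec_diagonal]

section ZeroFrequency

variable {n ι R : Type*} [CommRing R] [DecidableEq R]

/-- The vector `s = 1 - 2 · 1_{supp u}`, which is `-1` on the support of `u` and `1` off it. It
changes the sign of the potential where the power measurement of `u` is informative. -/
def supportSign (u : n → R) : n → R :=
  fun i => 1 - 2 * (if u i ≠ 0 then 1 else 0)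

variable [NoZeroDivisors R]

theorem supportSign_mul_mul_eq {q δq u v : n → R}
    (hpower : ∀ i, δq i * u i ^ 2 + 2 * q i * v i * u i = 0) :
    supportSign u * q * v = δq * u + q * v := by
  ext i
  by_cases hu : u i = 0
  · simp [supportSign, hu]
  · have hdiv : δq i * u i + 2 * q i * v i = 0 :=
      (mul_eq_zero.1 (by linear_combination hpower i)).resolve_right hu
    simp only [Pi.mul_apply, Pi.add_apply, supportSign, ne_eq, hu, not_false_eq_true, if_true]
    linear_combination -hdiv

variable [Fintype n] [DecidableEq n]

theorem eq_zero_of_linearized_state_of_power {A : Matrix n n R} {q δq u v : n → R}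
    (hA : IsUnit (A + diagonal (supportSign u * q)))
    (hstate : A *ᵥ v + δq * u + q * v = 0)
    (hpower : ∀ i, δq i * u i ^ 2 + 2 * q i * v i * u i = 0) : v = 0 := by
  refine mulVec_injective_of_isUnit hA ?_
  calc (A + diagonal (supportSign u * q)) *ᵥ v
    _ = A *ᵥ v + supportSign u * q * v := add_diagonal_mulVec _ _ _
    _ = 0 := by rw [supportSign_mul_mul_eq hpower, ← add_assoc, hstate]
    _ = (A + diagonal (supportSign u * q)) *ᵥ 0 := (mulVec_zero _).symm

theorem zero_frequency_linearization_injective {A : Matrix n n R} {q δq : n → R} {u v : ι → n → R}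
    (hcover : ∀ i, ∃ j, u j i ≠ 0) (hA : ∀ j, IsUnit (A + diagonal (supportSign (u j) * q)))
    (hstate : ∀ j, A *ᵥ v j + δq * u j + q * v j = 0)
    (hpower : ∀ j i, δq i * u j i ^ 2 + 2 * q i * v j i * u j i = 0) :
    δq = 0 ∧ ∀ j, v j = 0 := by
  have hv (j : ι) : v j = 0 := eq_zero_of_linearized_state_of_power (hA j) (hstate j) (hpower j)
  refine ⟨funext fun i => ?_, hv⟩
  obtain ⟨j, hj⟩ := hcover i
  simpa [hv, hj] using hpower j i

end ZeroFrequency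

section NonzeroFrequency

theorem map_re_mulVec {m n : Type*} [Fintype n] (A : Matrix m n ℂ) (x : n → ℝ) (i : m) :
    (A.map Complex.re *ᵥ x) i = ((A *ᵥ fun k => (x k : ℂ)) i).re := by
  simp [mulVec, dotProduct]

theorem re_conj_mul_eq_zero {q : ℝ} (hq : q ≠ 0) {u v : ℂ}
    (h : q * conj u * v + q * u * conj v = 0) : (conj u * v).re = 0 := by
  have hsum : conj u * v + conj (conj u * v) = 0 := by
    refine (mul_eq_zero.1 ?_).resolve_left (Complex.ofReal_ne_zero.2 hq)
    rw [map_mul, Complex.conj_conj]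
    linear_combination h
  rw [Complex.add_conj] at hsum
  exact (mul_eq_zero.1 (Complex.ofReal_eq_zero.1 hsum)).resolve_left two_ne_zero

variable {n ι : Type*} [Fintype n] [DecidableEq n]

/-- The matrix `B = -i diag(conj u) A⁻¹ diag(u)`, where `A` is the interior Schrödinger operator
and `u` the interior field. Up to the factor `ω`, it maps a perturbation of the imaginary part of
the potential to `conj u ⊙ δu`, where `δu` is the resulting perturbation of the field. -/
def powerSensitivity (A : Matrix n n ℂ) (u : n → ℂ) : Matrix n n ℂ :=
  (-Complex.I) • (diagonal (fun i => conj (u i)) * A⁻¹ * diagonal u)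

theorem conj_mul_eq_powerSensitivity_mulVec {A : Matrix n n ℂ} (hA : IsUnit A) {ω : ℂ}
    {u v x : n → ℂ} (hstate : A *ᵥ v + (fun i => ω * x i * Complex.I) * u = 0) (i : n) :
    conj (u i) * v i = ω * (powerSensitivity A u *ᵥ x) i := by
  have hrhs : A *ᵥ v = (-(ω * Complex.I)) • diagonal u *ᵥ x := by
    rw [eq_neg_of_add_eq_zero_left hstate]
    ext k
    simp only [Pi.neg_apply, Pi.mul_apply, Pi.smul_apply, mulVec_diagonal, smul_eq_mul]
    ring
  have hsol : v = (-(ω * Complex.I)) • A⁻¹ *ᵥ diagonal u *ᵥ x := by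
    rw [← mulVec_smul, ← hrhs, mulVec_mulVec,
      nonsing_inv_mul _ ((isUnit_iff_isUnit_det _).1 hA), one_mulVec]
  rw [hsol, powerSensitivity, smul_mulVec, Matrix.mul_assoc, ← mulVec_mulVec, ← mulVec_mulVec]
  simp only [Pi.smul_apply, mulVec_diagonal, smul_eq_mul]
  ring

theorem map_re_powerSensitivity_mulVec_eq_zero {A : Matrix n n ℂ} (hA : IsUnit A) {q x : n → ℝ}
    (hq : ∀ i, q i ≠ 0) {ω : ℝ} (hω : ω ≠ 0) {u v : n → ℂ}
    (hstate : A *ᵥ v + (fun i => (ω : ℂ) * (x i : ℂ) * Complex.I) * u = 0)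
    (hpower : ∀ i, q i * conj (u i) * v i + q i * u i * conj (v i) = 0) :
    (powerSensitivity A u).map Complex.re *ᵥ x = 0 := by
  ext i
  have hre := re_conj_mul_eq_zero (hq i) (hpower i)
  rw [conj_mul_eq_powerSensitivity_mulVec hA hstate, Complex.re_ofReal_mul] at hre
  rw [map_re_mulVec]
  exact (mul_eq_zero.1 hre).resolve_left hω

theorem nonzero_frequency_linearization_injective {A : Matrix n n ℂ} (hA : IsUnit A)
    {q x : n → ℝ} (hq : ∀ i, q i ≠ 0) {ω : ℝ} (hω : ω ≠ 0) {u v : ι → n → ℂ}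
    (hrank : ∀ y : n → ℝ, (∀ j, (powerSensitivity A (u j)).map Complex.re *ᵥ y = 0) → y = 0)
    (hstate : ∀ j, A *ᵥ v j + (fun i => (ω : ℂ) * (x i : ℂ) * Complex.I) * u j = 0)
    (hpower : ∀ j i, q i * conj (u j i) * v j i + q i * u j i * conj (v j i) = 0) :
    x = 0 ∧ ∀ j, v j = 0 := by
  have hx : x = 0 := hrank x fun j =>
    map_re_powerSensitivity_mulVec_eq_zero hA hq hω (hstate j) (hpower j)
  exact ⟨hx, fun j => mulVec_injective_of_isUnit hA
    (by simpa [hx, ← Pi.zero_def] using hstate j)⟩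

end NonzeroFrequency

theorem complex_schroedinger_linearization_injective_general
    {m n ι : Type*} [Fintype m] [Fintype n] [DecidableEq n]
    (L₀ : Matrix (m ⊕ n) (m ⊕ n) ℝ) (L₁ : Matrix (m ⊕ n) (m ⊕ n) ℂ)
    {q₀ : n → ℝ} (hq₀ : ∀ i, q₀ i ≠ 0) {q₁ : n → ℂ} {ω : ℝ} (hω : ω ≠ 0)
    {u₀ : ι → m ⊕ n → ℝ} {u₁ : ι → m ⊕ n → ℂ}
    (hcover : ∀ i, ∃ j, u₀ j (Sum.inr i) ≠ 0)
    (hinv₀ : ∀ j, IsUnit (L₀.submatrix Sum.inr Sum.inr +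
      diagonal (supportSign (u₀ j ∘ Sum.inr) * q₀)))
    (hinv₁ : IsUnit (L₁.submatrix Sum.inr Sum.inr + diagonal q₁))
    (hrank : ∀ x : n → ℝ, (∀ j, (powerSensitivity (L₁.submatrix Sum.inr Sum.inr + diagonal q₁)
      (u₁ j ∘ Sum.inr)).map Complex.re *ᵥ x = 0) → x = 0)
    {δq' δq'' : n → ℝ} {δu₀ : ι → m ⊕ n → ℝ} {δu₁ : ι → m ⊕ n → ℂ}
    (hbdry₀ : ∀ j, δu₀ j ∘ Sum.inl = 0) (hbdry₁ : ∀ j, δu₁ j ∘ Sum.inl = 0)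
    (hstate₀ : ∀ j, (L₀ *ᵥ δu₀ j) ∘ Sum.inr + δq' * (u₀ j ∘ Sum.inr) +
      q₀ * (δu₀ j ∘ Sum.inr) = 0)
    (hpower₀ : ∀ j i, δq' i * u₀ j (Sum.inr i) ^ 2 +
      2 * q₀ i * δu₀ j (Sum.inr i) * u₀ j (Sum.inr i) = 0)
    (hstate₁ : ∀ j, (L₁ *ᵥ δu₁ j) ∘ Sum.inr +
      (fun i => (δq' i : ℂ) + (ω : ℂ) * (δq'' i : ℂ) * Complex.I) * (u₁ j ∘ Sum.inr) +
      q₁ * (δu₁ j ∘ Sum.inr) = 0)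
    (hpower₁ : ∀ j i, (δq' i : ℂ) * (‖u₁ j (Sum.inr i)‖ : ℂ) ^ 2 +
      q₀ i * conj (u₁ j (Sum.inr i)) * δu₁ j (Sum.inr i) +
      q₀ i * u₁ j (Sum.inr i) * conj (δu₁ j (Sum.inr i)) = 0) :
    δq' = 0 ∧ δq'' = 0 ∧ (∀ j, δu₀ j = 0) ∧ (∀ j, δu₁ j = 0) := by
  simp only [mulVec_comp_inr_of_comp_inl_eq_zero, hbdry₀, hbdry₁] at hstate₀ hstate₁
  obtain ⟨rfl, hδu₀⟩ := zero_frequency_linearization_injective hcover hinv₀ hstate₀ hpower₀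
  have hstate₁' (j : ι) : (L₁.submatrix Sum.inr Sum.inr + diagonal q₁) *ᵥ (δu₁ j ∘ Sum.inr) +
      (fun i => (ω : ℂ) * (δq'' i : ℂ) * Complex.I) * (u₁ j ∘ Sum.inr) = 0 := by
    rw [add_diagonal_mulVec, add_right_comm]
    simpa using hstate₁ j
  have hpower₁' (j : ι) (i : n) : q₀ i * conj (u₁ j (Sum.inr i)) * δu₁ j (Sum.inr i) +
      q₀ i * u₁ j (Sum.inr i) * conj (δu₁ j (Sum.inr i)) = 0 := by
    simpa using hpower₁ j i
  obtain ⟨hδq'', hδu₁⟩ :=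
    nonzero_frequency_linearization_injective hinv₁ hq₀ hω hrank hstate₁' hpower₁'
  exact ⟨rfl, hδq'', fun j => eq_zero_of_comp_inl_of_comp_inr (hbdry₀ j) (hδu₀ j),
    fun j => eq_zero_of_comp_inl_of_comp_inr (hbdry₁ j) (hδu₁ j)⟩

/-- local uniqueness for the two-frequency inverse complex Schrödinger
problem from dissipated power measurements. -/
theorem complex_schroedinger_linearization_injective
    (head tail : E → B ⊕ I) (hloop : ∀ e, head e ≠ tail e)
    (σ : E → ℝ) (hσ : ∀ e, 0 < σ e)
    (q' : I → ℝ) (hq' : ∀ i, q' i ≠ 0) (q'' : I → ℝ) (ω₁ : ℝ) (hω₁ : ω₁ ≠ 0)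
    (qc : I → ℂ) (hqc : qc = fun i => (q' i : ℂ) + (ω₁ : ℂ) * (q'' i : ℂ) * Complex.I)
    (N : ℕ) (u₀ : Fin N → B ⊕ I → ℝ) (u₁ : Fin N → B ⊕ I → ℂ)
    (hu₀ : ∀ j, ((dLap ℝ head tail σ *ᵥ u₀ j) ∘ Sum.inr) +
      (fun i => q' i * u₀ j (Sum.inr i)) = 0)
    (hu₁ : ∀ j, ((dLap ℂ head tail (fun e => (σ e : ℂ)) *ᵥ u₁ j) ∘ Sum.inr) +
      (fun i => qc i * u₁ j (Sum.inr i)) = 0)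
    -- (a) hypotheses of the real Schrödinger local-uniqueness theorem for σ, q', u₀
    (s : Fin N → I → ℝ)
    (hs : ∀ j i, s j i = 1 - 2 * (if u₀ j (Sum.inr i) ≠ 0 then 1 else 0))
    (hcover : ∀ i : I, ∃ j, u₀ j (Sum.inr i) ≠ 0)
    (hinv : IsUnit ((dLap ℝ head tail σ).submatrix Sum.inr Sum.inr + Matrix.diagonal q'))
    (hinvs : ∀ j, IsUnit ((dLap ℝ head tail σ).submatrix Sum.inr Sum.inr +
      Matrix.diagonal (fun i => s j i * q' i)))
    -- (b) invertibility at the nonzero frequency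
    (hinvc : IsUnit ((dLap ℂ head tail (fun e => (σ e : ℂ))).submatrix Sum.inr Sum.inr +
      Matrix.diagonal qc))
    -- (c) the real part of the stacked matrices B⁽ʲ⁾ has trivial nullspace
    (Bmat : Fin N → Matrix I I ℂ)
    (hB : ∀ j, Bmat j = (-Complex.I) •
      (Matrix.diagonal (fun i => starRingEnd ℂ (u₁ j (Sum.inr i))) *
        ((dLap ℂ head tail (fun e => (σ e : ℂ))).submatrix Sum.inr Sum.inr +
          Matrix.diagonal qc)⁻¹ *
        Matrix.diagonal (fun i => u₁ j (Sum.inr i))))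
    (hfullrank : ∀ x : I → ℝ,
      (∀ j, (Matrix.of fun i i' => (Bmat j i i').re) *ᵥ x = 0) → x = 0)
    -- the linearized equations
    (δq' δq'' : I → ℝ) (δu₀ : Fin N → B ⊕ I → ℝ) (δu₁ : Fin N → B ⊕ I → ℂ)
    (h2a : ∀ j, δu₀ j ∘ Sum.inl = 0)
    (h2b : ∀ j, δu₁ j ∘ Sum.inl = 0)
    (h3 : ∀ j, ((dLap ℝ head tail σ *ᵥ δu₀ j) ∘ Sum.inr) +
      (fun i => δq' i * u₀ j (Sum.inr i)) + (fun i => q' i * δu₀ j (Sum.inr i)) = 0)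
    (h4 : ∀ j i, δq' i * (u₀ j (Sum.inr i)) ^ 2 +
      2 * q' i * δu₀ j (Sum.inr i) * u₀ j (Sum.inr i) = 0)
    (h5 : ∀ j, ((dLap ℂ head tail (fun e => (σ e : ℂ)) *ᵥ δu₁ j) ∘ Sum.inr) +
      (fun i => ((δq' i : ℂ) + (ω₁ : ℂ) * (δq'' i : ℂ) * Complex.I) * u₁ j (Sum.inr i)) +
      (fun i => qc i * δu₁ j (Sum.inr i)) = 0)
    (h6 : ∀ j i, (δq' i : ℂ) * ((‖u₁ j (Sum.inr i)‖ : ℝ) : ℂ) ^ 2 +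
      (q' i : ℂ) * starRingEnd ℂ (u₁ j (Sum.inr i)) * δu₁ j (Sum.inr i) +
      (q' i : ℂ) * u₁ j (Sum.inr i) * starRingEnd ℂ (δu₁ j (Sum.inr i)) = 0) :
    δq' = 0 ∧ δq'' = 0 ∧ (∀ j, δu₀ j = 0) ∧ (∀ j, δu₁ j = 0) := by
  obtain ⟨rfl, rfl⟩ : s = _ ∧ Bmat = _ := ⟨funext₂ hs, funext hB⟩
  exact complex_schroedinger_linearization_injective_general _ _ hq' hω₁ hcover hinvs hinvc
    hfullrank h2a h2b h3 h4 h5 h6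
end
end
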